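/- Let D_n be the number of descents of a uniformly random permutation of S_n. Then (D_n − (n−1)/2) / sqrt((n+1)/12) converges in distribution, as n → ∞, to a standard normal random variable (i.e., the laws of these normalized random variables converge weakly to the standard Gaussian measure on ℝ). -/

import Mathlib

open Finset Topology

/-- The value of `π` at (0-indexed) position `j`, or `0` if `j` is out of range. -/
def permVal {n : ℕ} (π : Equiv.Perm (Fin n)) (j : ℕ) : ℕ :=
  if h : j < n then (π ⟨j, h⟩ : ℕ) else 0

/-- The number of descents of a permutation of `n` elements: the number of positions
`i` (0-indexed, `i < n - 1`) with `π i > π (i+1)`. -/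
def des {n : ℕ} (π : Equiv.Perm (Fin n)) : ℕ :=
  ((Finset.range (n - 1)).filter (fun i => permVal π (i + 1) < permVal π i)).card

/-- Insert the new maximum at position `j`. -/
def insMax {n : ℕ} (j : Fin (n+1)) (σ : Equiv.Perm (Fin n)) : Equiv.Perm (Fin (n+1)) :=
  ((finSuccEquiv' j).trans (Equiv.optionCongr σ)).trans (finSuccEquivLast).symm

lemma insMax_self {n : ℕ} (j : Fin (n+1)) (σ : Equiv.Perm (Fin n)) :
    insMax j σ j = Fin.last n := by
  simp [insMax]

lemma insMax_succAbove {n : ℕ} (j : Fin (n+1)) (σ : Equiv.Perm (Fin n)) (i : Fin n) :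
    insMax j σ (j.succAbove i) = (σ i).castSucc := by
  simp [insMax]

lemma insMax_bij (n : ℕ) : Function.Bijective
    (fun p : Fin (n+1) × Equiv.Perm (Fin n) => insMax p.1 p.2) := by
  rw [Fintype.bijective_iff_injective_and_card]
  constructor
  · rintro ⟨j, σ⟩ ⟨k, τ⟩ h
    simp only at h
    have hjk : j = k := by
      have h1 := insMax_self j σ
      rw [h, ← insMax_self k τ] at h1
      exact (insMax k τ).injective h1
    subst hjk
    have : σ = τ := by
      ext i
      have h1 := insMax_succAbove j σ i
      rw [h, insMax_succAbove] at h1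
      have := Fin.castSucc_injective n h1
      rw [this]
    rw [this]
  · simp [Fintype.card_perm, Nat.factorial_succ]

lemma permVal_insMax {n : ℕ} (j : Fin (n+1)) (σ : Equiv.Perm (Fin n)) (i : ℕ) (hi : i ≤ n) :
    permVal (insMax j σ) i = if i < j then permVal σ i else if i = j then n else
      permVal σ (i-1) := by
  have hj := j.2
  split_ifs with h1 h2
  · have : (⟨i, by omega⟩ : Fin (n+1)) = j.succAbove ⟨i, by omega⟩ := by
      rw [Fin.succAbove_of_castSucc_lt]
      · rfl
      · simpa [Fin.lt_def] using h1
    rw [permVal, permVal, dif_pos (by omega), dif_pos (by omega), this, insMax_succAbove]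
    rfl
  · have : (⟨i, by omega⟩ : Fin (n+1)) = j := by ext; exact h2
    rw [permVal, dif_pos (by omega), this, insMax_self]; rfl
  · have : (⟨i, by omega⟩ : Fin (n+1)) = j.succAbove ⟨i-1, by omega⟩ := by
      rw [Fin.succAbove_of_le_castSucc]
      · ext; simp; omega
      · simp only [Fin.le_def, Fin.castSucc_mk]; omega
    rw [permVal, permVal, dif_pos (by omega), dif_pos (by omega), this, insMax_succAbove]
    rfl

lemma permVal_lt {n : ℕ} (σ : Equiv.Perm (Fin n)) (i : ℕ) (hi : i < n) : permVal σ i < n := by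
  rw [permVal, dif_pos hi]; exact (σ _).2

/-- descents as a sum -/
lemma des_eq {n : ℕ} (σ : Equiv.Perm (Fin n)) :
    des σ = ∑ i ∈ range (n-1), if permVal σ (i+1) < permVal σ i then 1 else 0 := by
  rw [des, card_filter]

/-- positions where insertion preserves the number of descents -/
def goodPos {n : ℕ} (σ : Equiv.Perm (Fin n)) (j : ℕ) : Prop :=
  j = n ∨ (1 ≤ j ∧ j < n ∧ permVal σ j < permVal σ (j-1))

instance {n : ℕ} (σ : Equiv.Perm (Fin n)) : DecidablePred (goodPos σ) := fun j => by
  unfold goodPos; infer_instance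

lemma des_insMax {n : ℕ} (j : Fin (n+1)) (σ : Equiv.Perm (Fin n)) :
    des (insMax j σ) = if goodPos σ j then des σ else des σ + 1 := by
  have hj := j.2
  have key := permVal_insMax j σ
  have hlt := permVal_lt σ
  rw [des_eq, des_eq]
  generalize hJ : (j : ℕ) = J at *
  simp only [Nat.add_sub_cancel]
  rcases Nat.lt_or_ge J n with h | h
  · obtain ⟨m, rfl⟩ : ∃ m, n = J + 1 + m := ⟨n - J - 1, by omega⟩
    rw [sum_range_add, sum_range_succ]
    have e2 : (if permVal (insMax j σ) (J + 1) < permVal (insMax j σ) J then 1 else 0) = 1 := by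
      rw [key _ (by omega), key _ (by omega)]
      have := hlt J (by omega)
      simp [this]
    have e3 : ∀ i ∈ range m, (if permVal (insMax j σ) (J + 1 + i + 1) <
        permVal (insMax j σ) (J + 1 + i) then 1 else 0) =
        if permVal σ (J + i + 1) < permVal σ (J + i) then 1 else 0 := by
      intro i hi
      have := mem_range.1 hi
      have k1 := key (J + 1 + i + 1) (by omega)
      have k2 := key (J + 1 + i) (by omega)
      rw [if_neg (by omega), if_neg (by omega)] at k1 k2
      rw [k1, k2]
      rw [show J + 1 + i + 1 - 1 = J + i + 1 by omega, show J + 1 + i - 1 = J + i by omega]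
    rw [e2, sum_congr rfl e3]
    rcases J with _ | k
    · have : ¬ goodPos σ 0 := by unfold goodPos; omega
      rw [if_neg this]
      simp [show 1 + m - 1 = m by omega]; ring
    · rw [sum_range_succ]
      have e4 : (if permVal (insMax j σ) (k + 1) < permVal (insMax j σ) k then 1 else 0) = 0 := by
        rw [key _ (by omega), key _ (by omega)]
        have := hlt k (by omega)
        simp; omega
      have e5 : ∀ i ∈ range k, (if permVal (insMax j σ) (i + 1) <
        permVal (insMax j σ) i then 1 else 0) =
        if permVal σ (i + 1) < permVal σ i then 1 else 0 := by
        intro i hi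
        have := mem_range.1 hi
        have k1 := key (i + 1) (by omega)
        have k2 := key i (by omega)
        rw [if_pos (by omega)] at k1 k2
        rw [k1, k2]
      rw [e4, sum_congr rfl e5, show k + 1 + 1 + m - 1 = k + 1 + m by omega, sum_range_add _ (k+1),
        sum_range_succ]
      by_cases hg : permVal σ (k+1) < permVal σ k
      · have : goodPos σ (k+1) := Or.inr ⟨by omega, by omega, hg⟩
        rw [if_pos this, if_pos hg]
      · have : ¬ goodPos σ (k+1) := by
          rintro (h | ⟨_, _, h⟩)
          · omega
          · exact hg h
        rw [if_neg this, if_neg hg]; ring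
  · have hJn : J = n := by omega
    subst hJn
    rw [if_pos (show goodPos σ J from Or.inl rfl)]
    rcases J with _ | k
    · simp
    · rw [sum_range_succ]
      simp only [Nat.add_sub_cancel]
      have e4 : (if permVal (insMax j σ) (k + 1) < permVal (insMax j σ) k then 1 else 0) = 0 := by
        rw [key _ (by omega), key _ (by omega)]
        have := hlt k (by omega)
        simp; omega
      have e5 : ∀ i ∈ range k, (if permVal (insMax j σ) (i + 1) <
        permVal (insMax j σ) i then 1 else 0) =
        if permVal σ (i + 1) < permVal σ i then 1 else 0 := by
        intro i hi
        have := mem_range.1 hi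
        have k1 := key (i + 1) (by omega)
        have k2 := key i (by omega)
        rw [if_pos (by omega)] at k1 k2
        rw [k1, k2]
      rw [e4, sum_congr rfl e5]; rfl

lemma sum_good {n : ℕ} (σ : Equiv.Perm (Fin n)) :
    ∑ j ∈ range (n+1), (if goodPos σ j then 1 else 0) = des σ + 1 := by
  rw [sum_range_succ, if_pos (show goodPos σ n from Or.inl rfl), des_eq]
  congr 1
  rcases n with _ | k
  · simp
  · rw [sum_range_succ']
    have : ¬ goodPos σ 0 := by unfold goodPos; omega
    rw [if_neg this, add_zero]
    apply sum_congr rfl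
    intro i hi
    have := mem_range.1 hi
    congr 1
    simp only [goodPos, Nat.add_sub_cancel, eq_iff_iff]
    constructor
    · rintro (h | h)
      · omega
      · exact h.2.2
    · intro h; exact Or.inr ⟨by omega, by omega, h⟩

lemma des_rec (n : ℕ) (g : ℕ → ℂ) :
    ∑ π : Equiv.Perm (Fin (n+1)), g (des π) =
      ∑ σ : Equiv.Perm (Fin n), (((des σ : ℂ) + 1) * g (des σ) +
        ((n : ℂ) - des σ) * g (des σ + 1)) := by
  rw [← (insMax_bij n).sum_comp, Fintype.sum_prod_type_right]
  apply sum_congr rfl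
  intro σ _
  have e : ∀ j : Fin (n+1), g (des (insMax j σ)) =
      (fun j : ℕ => g (des σ + 1) + ((if goodPos σ j then 1 else 0 : ℕ) : ℂ) *
        (g (des σ) - g (des σ + 1))) j := by
    intro j
    rw [des_insMax]
    by_cases h : goodPos σ j <;> simp [h]
  simp only [e]
  rw [Fin.sum_univ_eq_sum_range (fun j : ℕ => g (des σ + 1) +
    ((if goodPos σ j then 1 else 0 : ℕ) : ℂ) * (g (des σ) - g (des σ + 1))) (n+1),
    sum_add_distrib, ← sum_mul, ← Nat.cast_sum, sum_good]
  simp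
  ring

lemma des_le {n : ℕ} (σ : Equiv.Perm (Fin n)) : des σ ≤ n := by
  unfold des
  refine (card_filter_le _ _).trans ?_
  simp

lemma exp_taylor (x : ℝ) (hx : |x| ≤ 1) :
    ‖Complex.exp (x * Complex.I) - (1 + x * Complex.I - (x:ℂ)^2/2)‖ ≤ |x|^3 := by
  have hn : ‖(x:ℂ) * Complex.I‖ = |x| := by simp
  have h := Complex.exp_bound (x := x * Complex.I) (by rw [hn]; exact hx) (n := 3) (by norm_num)
  rw [hn] at h
  have e : ∑ m ∈ range 3, ((x:ℂ) * Complex.I) ^ m / (m.factorial : ℂ)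
      = 1 + x * Complex.I - (x:ℂ)^2/2 := by
    simp [sum_range_succ, mul_pow, Nat.factorial]
    ring
  rw [e] at h
  refine h.trans ?_
  have : 0 ≤ |x|^3 := by positivity
  norm_num [Nat.factorial]
  linarith

lemma step_bound (u y : ℝ) (hu : |u| ≤ 1) (hy : |y| ≤ 1/2) :
    ‖(1/2 + (y:ℂ)) * Complex.exp ((u * (y - 1/2) : ℝ) * Complex.I) +
      (1/2 - (y:ℂ)) * Complex.exp ((u * (y + 1/2) : ℝ) * Complex.I) -
      (Real.exp (-(u^2/8)) : ℂ)‖ ≤ 2 * |u|^3 + u^2 * y^2 := by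
  obtain ⟨hy1, hy2⟩ := abs_le.1 hy
  have ha : |u * (y - 1/2)| ≤ |u| := by
    rw [abs_mul]
    exact mul_le_of_le_one_right (abs_nonneg _) (abs_le.2 ⟨by linarith, by linarith⟩)
  have hb : |u * (y + 1/2)| ≤ |u| := by
    rw [abs_mul]
    exact mul_le_of_le_one_right (abs_nonneg _) (abs_le.2 ⟨by linarith, by linarith⟩)
  have ta := (exp_taylor _ (ha.trans hu)).trans (pow_le_pow_left₀ (abs_nonneg _) ha 3)
  have tb := (exp_taylor _ (hb.trans hu)).trans (pow_le_pow_left₀ (abs_nonneg _) hb 3)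
  have hu2 : u^2 ≤ 1 := by rw [← sq_abs]; exact pow_le_one₀ (abs_nonneg _) hu
  have tv := Real.abs_exp_sub_one_sub_id_le (x := -(u^2/8))
    (by rw [abs_neg, abs_of_nonneg (by positivity)]; linarith)
  have hv : (-(u^2/8))^2 ≤ |u|^3 := by
    have h4 : (-(u^2/8))^2 = |u|^3 * |u| / 64 := by
      have : |u|^3 * |u| = u^4 := by rw [← pow_succ, Even.pow_abs (by decide)]
      rw [this]; ring
    rw [h4]
    have : |u|^3 * |u| ≤ |u|^3 := mul_le_of_le_one_right (by positivity) hu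
    have : 0 ≤ |u|^3 := by positivity
    linarith
  set Ra := Complex.exp ((u * (y - 1/2) : ℝ) * Complex.I) -
    (1 + (u * (y - 1/2) : ℝ) * Complex.I - ((u * (y - 1/2) : ℝ):ℂ)^2/2) with hRa
  set Rb := Complex.exp ((u * (y + 1/2) : ℝ) * Complex.I) -
    (1 + (u * (y + 1/2) : ℝ) * Complex.I - ((u * (y + 1/2) : ℝ):ℂ)^2/2) with hRb
  have e : (1/2 + (y:ℂ)) * Complex.exp ((u * (y - 1/2) : ℝ) * Complex.I) +
      (1/2 - (y:ℂ)) * Complex.exp ((u * (y + 1/2) : ℝ) * Complex.I) -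
      (Real.exp (-(u^2/8)) : ℂ) = ((1/2 + y : ℝ):ℂ) * Ra + ((1/2 - y : ℝ):ℂ) * Rb
      + ((u^2*y^2/2 : ℝ) : ℂ) - ((Real.exp (-(u^2/8)) - 1 - (-(u^2/8)) : ℝ) : ℂ) := by
    rw [hRa, hRb]; push_cast; ring
  rw [e]
  refine (norm_sub_le _ _).trans ?_
  refine (add_le_add_left (norm_add₃_le) _).trans ?_
  rw [norm_mul, norm_mul, Complex.norm_real, Complex.norm_real, Complex.norm_real,
    Complex.norm_real, Real.norm_eq_abs, Real.norm_eq_abs, Real.norm_eq_abs, Real.norm_eq_abs,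
    abs_of_nonneg (show 0 ≤ 1/2 + y by linarith), abs_of_nonneg (show 0 ≤ 1/2 - y by linarith),
    abs_of_nonneg (show 0 ≤ u^2*y^2/2 by positivity)]
  have m1 := mul_le_mul_of_nonneg_left ta (show 0 ≤ 1/2 + y by linarith)
  have m2 := mul_le_mul_of_nonneg_left tb (show 0 ≤ 1/2 - y by linarith)
  have : 0 ≤ u^2*y^2 := by positivity
  linarith

/-- expectation of a function of the number of descents -/
noncomputable def Ex (n : ℕ) (g : ℕ → ℂ) : ℂ :=
  (∑ π : Equiv.Perm (Fin n), g (des π)) / (n.factorial : ℂ)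

/-- real version -/
noncomputable def ExR (n : ℕ) (g : ℕ → ℝ) : ℝ :=
  (∑ π : Equiv.Perm (Fin n), g (des π)) / (n.factorial : ℝ)

lemma ExR_cast (n : ℕ) (g : ℕ → ℝ) : ((ExR n g : ℝ) : ℂ) = Ex n (fun d => (g d : ℂ)) := by
  simp [ExR, Ex]

lemma Ex_succ (n : ℕ) (g : ℕ → ℂ) : Ex (n+1) g =
    Ex n (fun d => (((d:ℂ) + 1) * g d + ((n:ℂ) - d) * g (d+1)) / (n+1)) := by
  unfold Ex
  rw [des_rec, ← sum_div, Nat.factorial_succ, div_div]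
  push_cast
  rfl

lemma ExR_succ (n : ℕ) (g : ℕ → ℝ) : ExR (n+1) g =
    ExR n (fun d => (((d:ℝ) + 1) * g d + ((n:ℝ) - d) * g (d+1)) / (n+1)) := by
  apply Complex.ofReal_injective
  rw [ExR_cast, ExR_cast, Ex_succ]
  push_cast
  rfl

lemma ExR_mono (n : ℕ) (g h : ℕ → ℝ) (hgh : ∀ d ≤ n, g d ≤ h d) : ExR n g ≤ ExR n h := by
  unfold ExR
  gcongr with π
  exact hgh _ (des_le π)

lemma norm_Ex_le (n : ℕ) (g : ℕ → ℂ) (h : ℕ → ℝ) (hgh : ∀ d ≤ n, ‖g d‖ ≤ h d) :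
    ‖Ex n g‖ ≤ ExR n h := by
  unfold Ex ExR
  rw [norm_div, Complex.norm_natCast]
  gcongr
  exact (norm_sum_le _ _).trans (sum_le_sum fun π _ => hgh _ (des_le π))

lemma ExR_affine (n : ℕ) (a b : ℝ) (h : ℕ → ℝ) :
    ExR n (fun d => a + b * h d) = a + b * ExR n h := by
  have : (n.factorial : ℝ) ≠ 0 := by positivity
  unfold ExR
  rw [sum_add_distrib, ← mul_sum, sum_const, card_univ, Fintype.card_perm, Fintype.card_fin]
  simp
  field_simp

lemma Ex_sub (n : ℕ) (c : ℂ) (g h : ℕ → ℂ) :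
    Ex n g - c * Ex n h = Ex n (fun d => g d - c * h d) := by
  unfold Ex
  rw [sum_sub_distrib, ← mul_sum]
  ring

lemma var_bound (n : ℕ) : ExR n (fun d => ((d:ℝ) - ((n:ℝ) - 1)/2)^2) ≤ ((n:ℝ) + 1)/4 := by
  induction n with
  | zero =>
    have := ExR_mono 0 (fun d => ((d:ℝ) - (((0:ℕ):ℝ) - 1)/2)^2) (fun d => 1/4 + 0 * 0) (by
      intro d hd
      have : d = 0 := by omega
      subst this
      norm_num)
    rw [ExR_affine 0 (1/4) 0 (fun _ => 0)] at this
    norm_num at this ⊢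
    exact this
  | succ n ih =>
    rw [ExR_succ]
    refine (ExR_mono n _ (fun d => 1/4 + 1 * ((d:ℝ) - ((n:ℝ) - 1)/2)^2) ?_).trans ?_
    · intro d hd
      have hn : (0:ℝ) < n + 1 := by positivity
      rw [div_le_iff₀ hn]
      push_cast
      nlinarith [sq_nonneg ((d:ℝ) - ((n:ℝ) - 1)/2)]
    · rw [ExR_affine]
      push_cast
      linarith

/-- characteristic function of the martingale `n (D_n - (n-1)/2)` -/
noncomputable def Psi (θ : ℝ) (n : ℕ) : ℂ :=
  Ex n (fun d => Complex.exp ((θ * (n * ((d:ℝ) - ((n:ℝ) - 1)/2)) : ℝ) * Complex.I))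

lemma Psi_zero (θ : ℝ) : Psi θ 0 = 1 := by
  simp [Psi, Ex]

lemma Psi_step (θ : ℝ) (n : ℕ) (h : |θ * (n+1)| ≤ 1) :
    ‖Psi θ (n+1) - (Real.exp (-((θ * (n+1))^2/8)) : ℂ) * Psi θ n‖ ≤
      2 * |θ * (n+1)|^3 + θ^2 * ((n+1)/4) := by
  unfold Psi
  rw [Ex_succ, Ex_sub]
  refine (norm_Ex_le n _ (fun d => 2 * |θ * (n+1)|^3 + θ^2 * ((d:ℝ) - ((n:ℝ) - 1)/2)^2) ?_).trans ?_
  · intro d hd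
    have hd' : (d:ℝ) ≤ n := by exact_mod_cast hd
    have hd0 : (0:ℝ) ≤ d := by positivity
    have hn : (0:ℝ) < n + 1 := by positivity
    have hnc : (n:ℂ) + 1 ≠ 0 := by exact_mod_cast hn.ne'
    set y : ℝ := ((d:ℝ) - ((n:ℝ) - 1)/2) / (n+1) with hy
    have hyn : y * (n+1) = (d:ℝ) - ((n:ℝ) - 1)/2 := by rw [hy]; field_simp
    have hy2 : |y| ≤ 1/2 := by
      rw [abs_le]; constructor <;> nlinarith
    have hs := step_bound (θ * (n+1)) y h hy2
    have hexp : ‖Complex.exp ((θ * (n * ((d:ℝ) - ((n:ℝ) - 1)/2)) : ℝ) * Complex.I)‖ = 1 :=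
      Complex.norm_exp_ofReal_mul_I _
    have e1 : Complex.exp ((θ * (((n+1:ℕ):ℝ) * ((d:ℝ) - (((n+1:ℕ):ℝ) - 1)/2)) : ℝ) * Complex.I) =
       Complex.exp ((θ * (n * ((d:ℝ) - ((n:ℝ) - 1)/2)) : ℝ) * Complex.I) *
        Complex.exp ((θ * (n+1) * (y - 1/2) : ℝ) * Complex.I) := by
      rw [← Complex.exp_add, ← add_mul, ← Complex.ofReal_add]
      congr 3
      push_cast
      linear_combination (-θ) * hyn
    have e2 : Complex.exp ((θ * (((n+1:ℕ):ℝ) * (((d+1:ℕ):ℝ) - (((n+1:ℕ):ℝ) - 1)/2)) : ℝ) * Complex.I) =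
       Complex.exp ((θ * (n * ((d:ℝ) - ((n:ℝ) - 1)/2)) : ℝ) * Complex.I) *
        Complex.exp ((θ * (n+1) * (y + 1/2) : ℝ) * Complex.I) := by
      rw [← Complex.exp_add, ← add_mul, ← Complex.ofReal_add]
      congr 3
      push_cast
      linear_combination (-θ) * hyn
    have hyc : (y:ℂ) * (n+1) = (d:ℂ) - ((n:ℂ) - 1)/2 := by
      have := congrArg (fun z : ℝ => (z:ℂ)) hyn
      push_cast at this
      exact this
    have w1 : ((d:ℂ) + 1) = (1/2 + (y:ℂ)) * (n+1) := by linear_combination -hyc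
    have w2 : ((n:ℂ) - d) = (1/2 - (y:ℂ)) * (n+1) := by linear_combination hyc
    rw [e1, e2, w1, w2]
    have hfac : ∀ E A B C : ℂ, ((1/2 + (y:ℂ)) * (n+1) * (E * A) + (1/2 - (y:ℂ)) * (n+1) * (E * B))
        / (n+1) - C * E = E * ((1/2 + (y:ℂ)) * A + (1/2 - (y:ℂ)) * B - C) := by
      intro E A B C
      field_simp
    rw [hfac, norm_mul, hexp, one_mul]
    refine hs.trans (le_of_eq ?_)
    rw [← hyn]; ring
  · rw [ExR_affine]
    gcongr
    exact var_bound n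

lemma Psi_approx (θ : ℝ) (N : ℕ) (h : |θ| * N ≤ 1) (n : ℕ) (hn : n ≤ N) :
    ‖Psi θ n - (Real.exp (-(θ^2 * (n * (n+1) * (2*n+1))/48)) : ℂ)‖ ≤
      n * (2 * (|θ| * N)^3 + θ^2 * N) := by
  induction n with
  | zero => simp [Psi_zero]
  | succ n ih =>
    have ih := ih (by omega)
    have hnN : (n:ℝ) + 1 ≤ N := by exact_mod_cast hn
    have hn0 : (0:ℝ) ≤ n := by positivity
    have hab : |θ * (n+1)| ≤ |θ| * N := by
      rw [abs_mul, abs_of_nonneg (show (0:ℝ) ≤ n + 1 by positivity)]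
      gcongr
    have hs := Psi_step θ n (hab.trans h)
    have hs2 : 2 * |θ * (n+1)|^3 + θ^2 * ((n+1)/4) ≤ 2 * (|θ| * N)^3 + θ^2 * N := by
      gcongr
      linarith
    set c := Real.exp (-((θ * (n+1))^2/8)) with hc
    have hc1 : c ≤ 1 := Real.exp_le_one_iff.2 (by have := sq_nonneg (θ * (n+1)); linarith)
    have hc0 : 0 ≤ c := (Real.exp_pos _).le
    have he : Real.exp (-(θ^2 * (((n+1:ℕ):ℝ) * (((n+1:ℕ):ℝ)+1) * (2*((n+1:ℕ):ℝ)+1))/48)) =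
        c * Real.exp (-(θ^2 * (n * (n+1) * (2*n+1))/48)) := by
      rw [hc, ← Real.exp_add]
      congr 1
      push_cast
      ring
    rw [he]
    set G := Real.exp (-(θ^2 * (n * (n+1) * (2*n+1))/48))
    have e : Psi θ (n+1) - ((c * G : ℝ) : ℂ) = (Psi θ (n+1) - (c:ℂ) * Psi θ n) +
        (c:ℂ) * (Psi θ n - G) := by push_cast; ring
    rw [e]
    refine (norm_add_le _ _).trans ?_
    rw [norm_mul, Complex.norm_real, Real.norm_eq_abs, abs_of_nonneg hc0]
    have := mul_le_of_le_one_left (norm_nonneg (Psi θ n - G)) hc1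
    push_cast
    linarith

lemma charfun_tendsto (s : ℝ) : Filter.Tendsto (fun n : ℕ => Ex n (fun d =>
    Complex.exp (s * ((((d:ℝ) - ((n:ℝ) - 1)/2) / Real.sqrt (((n:ℝ)+1)/12) : ℝ)) * Complex.I)))
    Filter.atTop (𝓝 (Complex.exp (-(s:ℂ)^2/2))) := by
  -- scale
  set r : ℕ → ℝ := fun n => |s| / Real.sqrt (((n:ℝ)+1)/12) with hr
  have hinf : Filter.Tendsto (fun n : ℕ => Real.sqrt (((n:ℝ)+1)/12)) Filter.atTop Filter.atTop := by
    apply Real.tendsto_sqrt_atTop.comp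
    apply Filter.Tendsto.atTop_div_const (by norm_num)
    exact Filter.tendsto_atTop_add_const_right _ _ tendsto_natCast_atTop_atTop
  have hr0 : Filter.Tendsto r Filter.atTop (𝓝 0) := hinf.const_div_atTop _
  have hG : Filter.Tendsto (fun n : ℕ => ((Real.exp (-(s^2/2) - s^2/4 * (n:ℝ)⁻¹) : ℝ) : ℂ))
      Filter.atTop (𝓝 (Complex.exp (-(s:ℂ)^2/2))) := by
    have h1 : Filter.Tendsto (fun n : ℕ => -(s^2/2) - s^2/4 * (n:ℝ)⁻¹) Filter.atTop
        (𝓝 (-(s^2/2) - s^2/4 * 0)) :=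
      tendsto_const_nhds.sub (tendsto_const_nhds.mul tendsto_inv_atTop_nhds_zero_nat)
    have h2 := (Complex.continuous_ofReal.tendsto _).comp ((Real.continuous_exp.tendsto _).comp h1)
    have e : Complex.exp (-(s:ℂ)^2/2) = ((Real.exp (-(s^2/2) - s^2/4 * 0) : ℝ) : ℂ) := by
      push_cast
      congr 1
      ring
    rw [e]
    exact h2
  have hbd : Filter.Tendsto (fun n : ℕ => 24 * s^2 * r n + (r n)^2) Filter.atTop (𝓝 0) := by
    have := (hr0.const_mul (24 * s^2)).add (hr0.pow 2)
    simpa using this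
  have hdiff : Filter.Tendsto (fun n : ℕ => Ex n (fun d =>
      Complex.exp (s * ((((d:ℝ) - ((n:ℝ) - 1)/2) / Real.sqrt (((n:ℝ)+1)/12) : ℝ)) * Complex.I)) -
      ((Real.exp (-(s^2/2) - s^2/4 * (n:ℝ)⁻¹) : ℝ) : ℂ)) Filter.atTop (𝓝 0) := by
    refine squeeze_zero_norm' ?_ hbd
    filter_upwards [Filter.eventually_ge_atTop 1, hr0.eventually_le_const one_pos] with n hn hrn
    have hn0 : (0:ℝ) < n := by exact_mod_cast hn
    set σ := Real.sqrt (((n:ℝ)+1)/12) with hσ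
    have hσ0 : 0 < σ := Real.sqrt_pos.2 (by positivity)
    have hσ2 : σ^2 = ((n:ℝ)+1)/12 := Real.sq_sqrt (by positivity)
    have hrn' : r n = |s| / σ := rfl
    set θ := s / (n * σ) with hθ
    have hθn : |θ| * n = r n := by
      rw [hθ, hrn', abs_div, abs_of_pos (show 0 < n * σ by positivity)]
      field_simp
    have hP : Ex n (fun d => Complex.exp (s * ((((d:ℝ) - ((n:ℝ) - 1)/2) / σ : ℝ)) * Complex.I))
        = Psi θ n := by
      unfold Psi
      congr 1
      funext d
      congr 2
      rw [← Complex.ofReal_mul]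
      congr 1
      rw [hθ]
      field_simp
    have hb := Psi_approx θ n (by rw [hθn]; exact hrn) n le_rfl
    have hr2 : (r n)^2 * ((n:ℝ)+1) = 12 * s^2 := by
      rw [hrn', div_pow, sq_abs, hσ2]; field_simp
    have hexp : -(θ^2 * (n * (n+1) * (2*n+1))/48) = -(s^2/2) - s^2/4 * (n:ℝ)⁻¹ := by
      rw [hθ, div_pow, mul_pow, hσ2]; field_simp; ring
    rw [hexp, hθn] at hb
    rw [hP]
    refine hb.trans ?_
    have hθ2 : θ^2 * n^2 = (r n)^2 := by rw [← hθn, mul_pow, sq_abs]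
    have hrnn : 0 ≤ r n := by rw [hrn']; positivity
    have h3 : (n:ℝ) * (r n)^3 ≤ 12 * s^2 * r n := by
      rw [← hr2]
      have : 0 ≤ (r n)^3 := by positivity
      nlinarith
    nlinarith
  have := hdiff.add hG
  simpa using this

open MeasureTheory in
/-- law of the normalized number of descents -/
noncomputable def desLaw (n : ℕ) : Measure ℝ :=
  ∑ π : Equiv.Perm (Fin n), ((n.factorial : ENNReal)⁻¹) •
    Measure.dirac (((des π : ℝ) - ((n : ℝ) - 1) / 2) / Real.sqrt (((n : ℝ) + 1) / 12))

open MeasureTheory in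
instance (n : ℕ) : IsProbabilityMeasure (desLaw n) := by
  constructor
  simp only [desLaw, Measure.coe_finsetSum, Finset.sum_apply, Measure.smul_apply, measure_univ,
    smul_eq_mul, mul_one, sum_const, card_univ, Fintype.card_perm, Fintype.card_fin, nsmul_eq_mul]
  exact ENNReal.mul_inv_cancel (by exact_mod_cast n.factorial_ne_zero) (ENNReal.natCast_ne_top _)

open MeasureTheory in
lemma integral_desLaw {E : Type*} [NormedAddCommGroup E] [NormedSpace ℝ E] [CompleteSpace E]
    (n : ℕ) (f : ℝ → E) :
    ∫ x, f x ∂(desLaw n) = (n.factorial : ℝ)⁻¹ • ∑ π : Equiv.Perm (Fin n),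
      f (((des π : ℝ) - ((n : ℝ) - 1) / 2) / Real.sqrt (((n : ℝ) + 1) / 12)) := by
  rw [desLaw, integral_finsetSum_measure]
  · simp [smul_sum]
  · exact fun _ _ ↦ (integrable_dirac (by simp)).smul_measure (by simp [Nat.factorial_ne_zero])

/-- The normalized number of descents of a uniformly random permutation converges in
distribution to a standard normal random variable: for every bounded continuous test
function, the expectations converge to the Gaussian integral. -/
theorem descents_clt (f : BoundedContinuousFunction ℝ ℝ) :
    Filter.Tendsto
      (fun n : ℕ =>
        (∑ π : Equiv.Perm (Fin n),
            f (((des π : ℝ) - ((n : ℝ) - 1) / 2) / Real.sqrt (((n : ℝ) + 1) / 12)))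
          / (Nat.factorial n : ℝ))
      Filter.atTop
      (𝓝 (∫ x, f x ∂(ProbabilityTheory.gaussianReal 0 1))) := by
  have h : Filter.Tendsto (β := MeasureTheory.ProbabilityMeasure ℝ)
      (fun n => ⟨desLaw n, inferInstance⟩) Filter.atTop
      (nhds (X := MeasureTheory.ProbabilityMeasure ℝ)
        ⟨ProbabilityTheory.gaussianReal 0 1, inferInstance⟩) := by
    apply MeasureTheory.ProbabilityMeasure.tendsto_of_tendsto_charFun
    intro t
    simp only [MeasureTheory.ProbabilityMeasure.coe_mk]
    rw [ProbabilityTheory.charFun_gaussianReal]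
    convert charfun_tendsto t using 2
    · rw [MeasureTheory.charFun_apply_real, integral_desLaw, Ex, Complex.real_smul]
      push_cast
      exact (div_eq_inv_mul _ _).symm
    · congr 1; simp; ring
  have h2 := (MeasureTheory.ProbabilityMeasure.tendsto_iff_forall_integral_tendsto.1 h) f
  refine h2.congr fun n => ?_
  simp only [MeasureTheory.ProbabilityMeasure.coe_mk]
  rw [integral_desLaw, smul_eq_mul]
  exact (div_eq_inv_mul _ _).symm
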